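/- Let G ≅ C_m ⋉_φ C_{mn} for positive integers m, n. Then s_{mnℕ}(G) = m + 2mn − 2; that is, every sequence over G of length at least m + 2mn − 2 contains a nonempty product-one subsequence of length divisible by mn, and there exists a sequence of length m + 2mn − 3 with no such subsequence. -/

import Mathlib

/-- A sequence (multiset) over `G` is product-one if its terms can be ordered so
that their product equals `1`. -/
def IsProductOne {G : Type*} [Group G] (S : Multiset G) : Prop :=
  ∃ l : List G, (l : Multiset G) = S ∧ l.prod = 1

/-!
The sequence `x^{[m-1]} · y^{[mn-1]} · 1^{[mn-1]}` gives the lower bound: a product-one subsequence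
contains no `x`, as its image in `C_m` is product-one, hence no `y`, hence too few terms `1`.

For the upper bound, let `p` be the least prime factor of `m`. Then `s ≡ 1 mod p`, so that the
exponents of `x` and `y` of a product are additive modulo `p`. By Kemnitz' conjecture, `p` of any
`4p - 3` terms have exponent sums zero in `C_p ^ 2`, and therefore multiply to an element of the
metacyclic group `⟨x ^ p, y ^ p⟩`. Contracting such blocks of `p` terms reduces `m` to `m / p` and
`s` to `s ^ p`. By the Davenport constant of `C_p ^ 3`, the last `3p - 2` terms still contain such a
block, of length a multiple of `p`. When `m = 1`, the group is `C_n` and the same contraction at a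
prime `p` dividing `n` uses the Erdős–Ginzburg–Ziv theorem and `C_p ^ 2`.

Kemnitz' conjecture is proved by counting zero-sum subsets modulo `p`, as Reiher did: an alternating
sum over the cube `{0, 1}^ι` of a polynomial of degree less than `|ι|` vanishes.
-/

section CubeDegree

open Finset

variable {ι R : Type*} [DecidableEq ι] [CommRing R]

/-- The monomial `∏ i ∈ P, x i` as a function on the cube `{0, 1}^ι`, whose points are encoded as
the finite subsets `I` of `ι`. -/
def cubeMonomial (R : Type*) [CommRing R] (P I : Finset ι) : R :=
  if P ⊆ I then 1 else 0

variable (ι R) in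
/-- The functions on the cube `{0, 1}^ι`, encoded as in `cubeMonomial`, that are given by a
polynomial of degree at most `d`. -/
def cubeDegreeLE (d : ℕ) : Submodule R (Finset ι → R) :=
  Submodule.span R (cubeMonomial R '' {P | #P ≤ d})

lemma cubeMonomial_mem_cubeDegreeLE {P : Finset ι} {d : ℕ} (h : #P ≤ d) :
    cubeMonomial R P ∈ cubeDegreeLE ι R d :=
  Submodule.subset_span ⟨P, h, rfl⟩

lemma cubeDegreeLE_mono {d e : ℕ} (h : d ≤ e) : cubeDegreeLE ι R d ≤ cubeDegreeLE ι R e :=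
  Submodule.span_mono (Set.image_mono fun _ hP => le_trans hP h)

lemma cubeMonomial_mul (P Q : Finset ι) :
    cubeMonomial R P * cubeMonomial R Q = cubeMonomial R (P ∪ Q) := by
  ext I
  simp only [cubeMonomial, Pi.mul_apply, union_subset_iff, ite_and, mul_ite, mul_one, mul_zero]
  split_ifs <;> rfl

lemma one_mem_cubeDegreeLE (d : ℕ) : 1 ∈ cubeDegreeLE ι R d := by
  convert cubeMonomial_mem_cubeDegreeLE (R := R) (P := ∅) (Nat.zero_le d)
  ext I
  simp [cubeMonomial]

lemma mul_mem_cubeDegreeLE {f g : Finset ι → R} {d e : ℕ} (hf : f ∈ cubeDegreeLE ι R d)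
    (hg : g ∈ cubeDegreeLE ι R e) : f * g ∈ cubeDegreeLE ι R (d + e) := by
  induction hf, hg using Submodule.span_induction₂ with
  | mem_mem _ _ hP hQ =>
    obtain ⟨P, hP, rfl⟩ := hP
    obtain ⟨Q, hQ, rfl⟩ := hQ
    rw [cubeMonomial_mul]
    exact cubeMonomial_mem_cubeDegreeLE ((card_union_le P Q).trans (Nat.add_le_add hP hQ))
  | zero_left | zero_right => simp
  | add_left _ _ _ _ _ _ h₁ h₂ => rw [add_mul]; exact add_mem h₁ h₂
  | add_right _ _ _ _ _ _ h₁ h₂ => rw [mul_add]; exact add_mem h₁ h₂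
  | smul_left c _ _ _ _ h => rw [smul_mul_assoc]; exact Submodule.smul_mem _ c h
  | smul_right c _ _ _ _ h => rw [mul_smul_comm]; exact Submodule.smul_mem _ c h

lemma prod_mem_cubeDegreeLE {κ : Type*} (s : Finset κ) {f : κ → Finset ι → R} {d : ℕ}
    (hf : ∀ k ∈ s, f k ∈ cubeDegreeLE ι R d) : ∏ k ∈ s, f k ∈ cubeDegreeLE ι R (#s * d) := by
  classical
  induction s using Finset.induction_on with
  | empty => simpa using one_mem_cubeDegreeLE 0
  | insert k s hk ih =>
    rw [prod_insert hk, card_insert_of_notMem hk, add_one_mul, add_comm]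
    exact mul_mem_cubeDegreeLE (hf k (mem_insert_self k s))
      (ih fun j hj => hf j (mem_insert_of_mem hj))

lemma pow_mem_cubeDegreeLE {f : Finset ι → R} {d : ℕ} (hf : f ∈ cubeDegreeLE ι R d) (k : ℕ) :
    f ^ k ∈ cubeDegreeLE ι R (k * d) := by
  simpa using prod_mem_cubeDegreeLE (range k) fun _ _ => hf

lemma sum_mem_cubeDegreeLE_one [Finite ι] (c : ι → R) :
    (fun I : Finset ι => ∑ i ∈ I, c i) ∈ cubeDegreeLE ι R 1 := by
  have := Fintype.ofFinite ι
  convert Submodule.sum_mem (cubeDegreeLE ι R 1) fun i (_ : i ∈ univ) =>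
    Submodule.smul_mem _ (c i) (cubeMonomial_mem_cubeDegreeLE (card_singleton i).le)
  simp [cubeMonomial]

lemma choose_card_mem_cubeDegreeLE [Finite ι] (k : ℕ) :
    (fun I : Finset ι => ((#I).choose k : R)) ∈ cubeDegreeLE ι R k := by
  have := Fintype.ofFinite ι
  convert Submodule.sum_mem (cubeDegreeLE ι R k) fun P (hP : P ∈ powersetCard k univ) =>
    cubeMonomial_mem_cubeDegreeLE (mem_powersetCard.1 hP).2.le with I
  have hI : (powersetCard k univ).filter (· ⊆ I) = powersetCard k I := by
    ext P
    simp [mem_powersetCard, and_comm]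
  simp [cubeMonomial, hI]

lemma sum_powerset_neg_one_pow_card_mul_eq_zero {f : Finset ι → R} {d : ℕ}
    (hf : f ∈ cubeDegreeLE ι R d) {J : Finset ι} (hJ : d < #J) :
    ∑ I ∈ J.powerset, (-1) ^ #I * f I = 0 := by
  induction hf using Submodule.span_induction with
  | zero => simp
  | add f g _ _ hf hg => simp [mul_add, sum_add_distrib, hf, hg]
  | smul c f _ hf => simp [mul_left_comm _ c, ← mul_sum, hf]
  | mem f hf =>
    obtain ⟨P, hP, rfl⟩ := hf
    by_cases hPJ : P ⊆ J
    · obtain ⟨a, haJ, haP⟩ := exists_mem_notMem_of_card_lt_card (lt_of_le_of_lt hP hJ)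
      -- Expand `∏ i ∈ J, (-1 + [i ∉ P])`, whose factor at `a` vanishes.
      have expand := prod_add (fun _ : ι => (-1 : R)) (fun i => if i ∉ P then 1 else 0) J
      rw [prod_eq_zero haJ (by simp [haP])] at expand
      rw [expand]
      refine sum_congr rfl fun I _ => ?_
      have hI : P ⊆ I ↔ ∀ i ∈ J \ I, i ∉ P := by
        simp only [mem_sdiff, subset_iff]
        exact ⟨fun h i hi hiP => hi.2 (h hiP), fun h i hiP => by_contra fun hiI =>
          h i ⟨hPJ hiP, hiI⟩ hiP⟩
      simp only [cubeMonomial, hI, prod_const, prod_ite_zero, one_pow]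
    · refine sum_eq_zero fun I hI => ?_
      rw [cubeMonomial, if_neg fun hPI => hPJ (hPI.trans (mem_powerset.1 hI)), mul_zero]

end CubeDegree

section ZeroSum

open Finset

section Counting

variable {ι V : Type*} [DecidableEq V]

/-- The `k`-element subsets of `J` along which `f` sums to zero. Kemnitz' conjecture is proved by
counting them modulo a prime. -/
def zeroSumSubsets [AddCommMonoid V] (f : ι → V) (J : Finset ι) (k : ℕ) : Finset (Finset ι) :=
  {I ∈ J.powersetCard k | ∑ i ∈ I, f i = 0}

lemma mem_zeroSumSubsets [AddCommMonoid V] {f : ι → V} {I J : Finset ι} {k : ℕ} :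
    I ∈ zeroSumSubsets f J k ↔ I ⊆ J ∧ #I = k ∧ ∑ i ∈ I, f i = 0 := by
  simp [zeroSumSubsets, mem_powersetCard, and_assoc]

lemma zeroSumSubsets_zero [AddCommMonoid V] (f : ι → V) (J : Finset ι) :
    zeroSumSubsets f J 0 = {∅} := by
  simp [zeroSumSubsets, filter_singleton]

lemma zeroSumSubsets_eq_empty_of_card_lt [AddCommMonoid V] (f : ι → V) {J : Finset ι} {k : ℕ}
    (h : #J < k) : zeroSumSubsets f J k = ∅ := by
  simp [zeroSumSubsets, powersetCard_eq_empty.2 h]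

lemma zeroSumSubsets_mono [AddCommMonoid V] (f : ι → V) {J K : Finset ι} (h : J ⊆ K) (k : ℕ) :
    zeroSumSubsets f J k ⊆ zeroSumSubsets f K k :=
  filter_subset_filter _ (powersetCard_mono h)

variable [DecidableEq ι]

lemma union_mem_zeroSumSubsets [AddCommMonoid V] {f : ι → V} {A C J : Finset ι} {k l : ℕ}
    (hA : A ∈ zeroSumSubsets f J k) (hC : C ∈ zeroSumSubsets f (J \ A) l) :
    A ∪ C ∈ zeroSumSubsets f J (k + l) := by
  obtain ⟨hAJ, rfl, hAsum⟩ := mem_zeroSumSubsets.1 hA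
  obtain ⟨hCJ, rfl, hCsum⟩ := mem_zeroSumSubsets.1 hC
  have hAC : Disjoint A C := disjoint_of_subset_right hCJ disjoint_sdiff
  exact mem_zeroSumSubsets.2 ⟨union_subset hAJ (hCJ.trans sdiff_subset), card_union_of_disjoint hAC,
    by rw [sum_union hAC, hAsum, hCsum, add_zero]⟩

lemma sdiff_mem_zeroSumSubsets [AddCommGroup V] {f : ι → V} {C D J : Finset ι} {k l : ℕ}
    (hD : D ∈ zeroSumSubsets f J (k + l)) (hC : C ∈ zeroSumSubsets f D l) :
    D \ C ∈ zeroSumSubsets f J k := by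
  obtain ⟨hDJ, hDcard, hDsum⟩ := mem_zeroSumSubsets.1 hD
  obtain ⟨hCD, rfl, hCsum⟩ := mem_zeroSumSubsets.1 hC
  refine mem_zeroSumSubsets.2 ⟨sdiff_subset.trans hDJ, ?_, ?_⟩
  · rw [card_sdiff_of_subset hCD, hDcard, Nat.add_sub_cancel]
  · rw [sum_sdiff_eq_sub hCD, hDsum, hCsum, sub_zero]

lemma sum_card_zeroSumSubsets_sdiff [AddCommGroup V] (f : ι → V) (J : Finset ι) (k l : ℕ) :
    ∑ A ∈ zeroSumSubsets f J k, #(zeroSumSubsets f (J \ A) l)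
      = ∑ D ∈ zeroSumSubsets f J (k + l), #(zeroSumSubsets f D l) := by
  rw [← card_sigma, ← card_sigma]
  refine card_nbij' (fun q => ⟨q.1 ∪ q.2, q.2⟩) (fun q => ⟨q.1 \ q.2, q.2⟩) ?_ ?_ ?_ ?_
  · rintro ⟨A, C⟩ h
    obtain ⟨hA, hC⟩ := mem_sigma.1 h
    obtain ⟨-, hCcard, hCsum⟩ := mem_zeroSumSubsets.1 hC
    exact mem_sigma.2 ⟨union_mem_zeroSumSubsets hA hC,
      mem_zeroSumSubsets.2 ⟨subset_union_right, hCcard, hCsum⟩⟩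
  · rintro ⟨D, C⟩ h
    obtain ⟨hD, hC⟩ := mem_sigma.1 h
    obtain ⟨hDJ, -, -⟩ := mem_zeroSumSubsets.1 hD
    obtain ⟨hCD, hCcard, hCsum⟩ := mem_zeroSumSubsets.1 hC
    refine mem_sigma.2 ⟨sdiff_mem_zeroSumSubsets hD hC, mem_zeroSumSubsets.2 ⟨?_, hCcard, hCsum⟩⟩
    exact subset_sdiff.2 ⟨hCD.trans hDJ, disjoint_sdiff⟩
  · rintro ⟨A, C⟩ h
    obtain ⟨-, hC⟩ := mem_sigma.1 h
    have hAC : Disjoint A C := disjoint_of_subset_right (mem_zeroSumSubsets.1 hC).1 disjoint_sdiff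
    simp only [union_sdiff_cancel_right hAC]
  · rintro ⟨D, C⟩ h
    obtain ⟨-, hC⟩ := mem_sigma.1 h
    simp only [sdiff_union_of_subset (mem_zeroSumSubsets.1 hC).1]

end Counting

lemma sum_range_mul_eq_of_mod {M : Type*} [AddCommMonoid M] {p r : ℕ} (hr : r < p) (n : ℕ)
    {h : ℕ → M} (hh : ∀ k, k % p ≠ r → h k = 0) :
    ∑ k ∈ range (n * p), h k = ∑ q ∈ range n, h (q * p + r) := by
  induction n with
  | zero => simp
  | succ n ih =>
    rw [add_one_mul, sum_range_add, ih, sum_range_succ]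
    congr 1
    refine sum_eq_single r (fun j hj hjr => hh _ ?_) (fun hr' => absurd (mem_range.2 hr) hr')
    rwa [Nat.mul_add_mod', Nat.mod_eq_of_lt (mem_range.1 hj)]

section Prime

variable {p : ℕ} [Fact p.Prime]

lemma ite_eq_zero_eq_one_sub_pow (a : ZMod p) :
    (if a = 0 then 1 else 0) = 1 - a ^ (p - 1) := by
  rw [ZMod.pow_card_sub_one]
  split_ifs <;> simp_all

lemma natCast_choose_mul_add {r : ℕ} (hr : r < p) (q : ℕ) :
    ((q * p + r).choose p : ZMod p) = q := by
  have hp : 0 < p := (Fact.out : p.Prime).pos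
  have lucas := Choose.choose_modEq_choose_mod_mul_choose_div_nat (n := q * p + r) (k := p)
    (p := p)
  rw [Nat.mod_self, Nat.div_self hp, Nat.choose_zero_right, one_mul, Nat.choose_one_right,
    Nat.mul_comm q p, Nat.mul_add_div hp, Nat.div_eq_of_lt hr, add_zero, Nat.mul_comm p q] at lucas
  exact (ZMod.natCast_eq_natCast_iff _ _ _).2 lucas

variable {ι κ : Type*} [Fintype κ]

section CubeDegree

variable [DecidableEq ι] {F : Finset ι → ZMod p}

lemma ite_eq_mem_cubeDegreeLE (hF : F ∈ cubeDegreeLE ι (ZMod p) 1) (a : ZMod p) :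
    (fun I => if F I = a then 1 else 0) ∈ cubeDegreeLE ι (ZMod p) (p - 1) := by
  have hFa : F - a • 1 ∈ cubeDegreeLE ι (ZMod p) 1 :=
    sub_mem hF (Submodule.smul_mem _ a (one_mem_cubeDegreeLE 1))
  have hpow := pow_mem_cubeDegreeLE hFa (p - 1)
  rw [mul_one] at hpow
  convert sub_mem (one_mem_cubeDegreeLE _) hpow with I
  simp [← ite_eq_zero_eq_one_sub_pow, sub_eq_zero]

/-- The leading terms of `1 - F ^ (p - 1)` and `1 - (F + 1) ^ (p - 1)` cancel. -/
lemma ite_sub_ite_mem_cubeDegreeLE (hF : F ∈ cubeDegreeLE ι (ZMod p) 1) :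
    (fun I => (if F I = 0 then 1 else 0) - (if F I = -1 then 1 else 0))
      ∈ cubeDegreeLE ι (ZMod p) (p - 2) := by
  have expand : (fun I => (if F I = 0 then 1 else 0) - (if F I = -1 then 1 else 0))
      = ∑ j ∈ range (p - 1), ((p - 1).choose j : ZMod p) • F ^ j := by
    ext I
    simp only [eq_neg_iff_add_eq_zero]
    rw [ite_eq_zero_eq_one_sub_pow, ite_eq_zero_eq_one_sub_pow, add_pow, sum_range_succ]
    simp [mul_comm]
  rw [expand]
  refine Submodule.sum_mem _ fun j hj => Submodule.smul_mem _ _ ?_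
  refine cubeDegreeLE_mono ?_ (pow_mem_cubeDegreeLE hF j)
  have := mem_range.1 hj
  omega

lemma card_mem_cubeDegreeLE_one [Finite ι] :
    (fun I : Finset ι => (#I : ZMod p)) ∈ cubeDegreeLE ι (ZMod p) 1 := by
  simpa using choose_card_mem_cubeDegreeLE (ι := ι) (R := ZMod p) 1

lemma ite_sum_eq_zero_mem_cubeDegreeLE [Finite ι] (f : ι → κ → ZMod p) :
    (fun I : Finset ι => if ∑ i ∈ I, f i = 0 then 1 else 0)
      ∈ cubeDegreeLE ι (ZMod p) (Fintype.card κ * (p - 1)) := by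
  convert prod_mem_cubeDegreeLE univ fun k _ =>
    ite_eq_mem_cubeDegreeLE (sum_mem_cubeDegreeLE_one fun i => f i k) 0 with I
  · exact card_univ.symm
  · rw [Finset.prod_apply]
    simp [prod_ite_zero, funext_iff]

/-- The Chevalley-Warning type identity behind all the counts of zero-sum subsets below. -/
lemma sum_range_mul_card_zeroSumSubsets_eq_zero [Finite ι] (f : ι → κ → ZMod p)
    {J : Finset ι} {g : ℕ → ZMod p} {d N : ℕ}
    (hg : (fun I : Finset ι => g #I) ∈ cubeDegreeLE ι (ZMod p) d)
    (hJ : d + Fintype.card κ * (p - 1) < #J) (hN : #J < N) :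
    ∑ k ∈ range N, (-1) ^ k * g k * (#(zeroSumSubsets f J k) : ZMod p) = 0 := by
  rw [← sum_powerset_neg_one_pow_card_mul_eq_zero
    (mul_mem_cubeDegreeLE hg (ite_sum_eq_zero_mem_cubeDegreeLE f)) hJ,
    ← sum_fiberwise_of_maps_to fun I hI =>
      mem_range.2 ((card_le_card (mem_powerset.1 hI)).trans_lt hN)]
  refine sum_congr rfl fun k _ => ?_
  rw [zeroSumSubsets, natCast_card_filter, mul_sum, powersetCard_eq_filter]
  refine sum_congr rfl fun I hI => ?_
  simp only [Pi.mul_apply, (mem_filter.1 hI).2, mul_assoc]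

end CubeDegree

lemma sum_range_ite_mul_eq (hodd : Odd p) {r : ℕ} (hr : r < p) (hr2 : Even r) (n : ℕ)
    (w z : ℕ → ZMod p) :
    ∑ k ∈ range (n * p), (-1) ^ k * (w k * if (k : ZMod p) = r then 1 else 0) * z k
      = ∑ q ∈ range n, (-1) ^ q * w (q * p + r) * z (q * p + r) := by
  rw [sum_range_mul_eq_of_mod hr]
  · refine sum_congr rfl fun q _ => ?_
    rw [pow_add, hr2.neg_one_pow, mul_comm q p, pow_mul, hodd.neg_one_pow]
    simp
  · intro k hk
    have hkr : (k : ZMod p) ≠ r := by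
      rwa [Ne, ZMod.natCast_eq_natCast_iff', Nat.mod_eq_of_lt hr]
    rw [if_neg hkr, mul_zero, mul_zero, zero_mul]

lemma sum_neg_one_pow_mul_card_zeroSumSubsets [Finite ι] (hodd : Odd p)
    (f : ι → κ → ZMod p) {J : Finset ι} {n r : ℕ}
    (hJ : (Fintype.card κ + 1) * (p - 1) < #J) (hn : #J < n * p) (hr : r < p)
    (hr2 : Even r) :
    ∑ q ∈ range n, (-1) ^ q * (#(zeroSumSubsets f J (q * p + r)) : ZMod p) = 0 := by
  classical
  rw [add_one_mul, add_comm] at hJ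
  have vanish := sum_range_mul_card_zeroSumSubsets_eq_zero f
    (g := fun k => if (k : ZMod p) = r then 1 else 0)
    (ite_eq_mem_cubeDegreeLE card_mem_cubeDegreeLE_one _) hJ hn
  have collapse := sum_range_ite_mul_eq hodd hr hr2 n 1 fun k => #(zeroSumSubsets f J k)
  simp only [Pi.one_apply, one_mul, mul_one] at collapse
  rw [← collapse, vanish]

/-- By Lucas' theorem, the weight `q` is the value at `k = q * p + r` of `k.choose p`, a polynomial
of degree `p` in `k`. -/
lemma sum_neg_one_pow_mul_mul_card_sub_card [Finite ι] (hodd : Odd p)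
    (f : ι → κ → ZMod p) {J : Finset ι} {n : ℕ}
    (hJ : p + (p - 2) + Fintype.card κ * (p - 1) < #J) (hn : #J < n * p) :
    ∑ q ∈ range n, (-1) ^ q * (q : ZMod p) * ((#(zeroSumSubsets f J (q * p)) : ZMod p)
      - #(zeroSumSubsets f J (q * p + (p - 1)))) = 0 := by
  classical
  have hp : 0 < p := (Fact.out : p.Prime).pos
  have hpred : ((p - 1 : ℕ) : ZMod p) = -1 := by simp [Nat.cast_pred hp]
  have vanish := sum_range_mul_card_zeroSumSubsets_eq_zero f
    (g := fun k => (k.choose p : ZMod p)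
      * ((if (k : ZMod p) = 0 then 1 else 0) - if (k : ZMod p) = -1 then 1 else 0))
    (mul_mem_cubeDegreeLE (choose_card_mem_cubeDegreeLE p)
      (ite_sub_ite_mem_cubeDegreeLE card_mem_cubeDegreeLE_one)) hJ hn
  have collapse {r : ℕ} (hr : r < p) (hr2 : Even r) :
      ∑ k ∈ range (n * p), (-1) ^ k * (k.choose p * if (k : ZMod p) = r then 1 else 0)
          * (#(zeroSumSubsets f J k) : ZMod p)
        = ∑ q ∈ range n, (-1) ^ q * q * (#(zeroSumSubsets f J (q * p + r)) : ZMod p) := by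
    simpa only [natCast_choose_mul_add hr] using sum_range_ite_mul_eq hodd hr hr2 n
      (fun k => (k.choose p : ZMod p)) fun k => (#(zeroSumSubsets f J k) : ZMod p)
  have collapse₀ := collapse hp Even.zero
  have collapse₁ := collapse (Nat.sub_lt hp one_pos) (Nat.Odd.sub_odd hodd odd_one)
  simp only [hpred, Nat.cast_zero, add_zero] at collapse₀ collapse₁
  simp only [mul_sub, sub_mul, sum_sub_distrib] at vanish ⊢
  rw [← collapse₀, ← collapse₁, vanish]

/-- The upper bound `D(C_p ^ r) ≤ r * (p - 1) + 1` for the Davenport constant. -/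
lemma exists_nonempty_sum_eq_zero [Fintype ι] (f : ι → κ → ZMod p)
    (h : Fintype.card κ * (p - 1) < Fintype.card ι) :
    ∃ I : Finset ι, I.Nonempty ∧ ∑ i ∈ I, f i = 0 := by
  classical
  by_contra! hne
  have key := sum_powerset_neg_one_pow_card_mul_eq_zero (J := univ)
    (ite_sum_eq_zero_mem_cubeDegreeLE f) h
  rw [sum_eq_single ∅ (fun I _ hI => by simp [hne I (nonempty_iff_ne_empty.2 hI)])
    (by simp)] at key
  simp at key

end Prime

section Kemnitz

variable {p : ℕ} [Fact p.Prime] {ι : Type*} [Finite ι] {f : ι → Fin 2 → ZMod p} {J : Finset ι}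

lemma natCast_card_zeroSumSubsets_two_mul (hodd : Odd p) (hJ : 3 * (p - 1) < #J)
    (hJ' : #J < 4 * p) (hone : zeroSumSubsets f J p = ∅) (hthree : zeroSumSubsets f J (3 * p) = ∅) :
    (#(zeroSumSubsets f J (2 * p)) : ZMod p) = -1 := by
  have alternating := sum_neg_one_pow_mul_card_zeroSumSubsets hodd f (n := 4) (by simpa using hJ)
    hJ' (Fact.out : p.Prime).pos Even.zero
  simp [sum_range_succ, zeroSumSubsets_zero, hone, hthree] at alternating
  linear_combination alternating

lemma zeroSumSubsets_three_mul_eq_empty (hodd : Odd p) (hone : zeroSumSubsets f J p = ∅) :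
    zeroSumSubsets f J (3 * p) = ∅ := by
  classical
  have hp : 2 ≤ p := (Fact.out : p.Prime).two_le
  by_contra! hne
  obtain ⟨D, hD⟩ := hne
  obtain ⟨hDJ, hDcard, -⟩ := mem_zeroSumSubsets.1 hD
  obtain ⟨a, ha⟩ : D.Nonempty := card_pos.1 (by omega)
  have hcard : #(D.erase a) = 3 * p - 1 := by rw [card_erase_of_mem ha, hDcard]
  have htwo := natCast_card_zeroSumSubsets_two_mul (f := f) (J := D.erase a) hodd (by omega)
    (by omega) (subset_empty.1 (hone ▸ zeroSumSubsets_mono f ((erase_subset a D).trans hDJ) p))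
    (zeroSumSubsets_eq_empty_of_card_lt f (by omega))
  obtain ⟨C, hC⟩ : (zeroSumSubsets f (D.erase a) (2 * p)).Nonempty := by
    by_contra! h
    simp [h] at htwo
  have hCD := zeroSumSubsets_mono f (erase_subset a D) _ hC
  have hDC : D \ C ∈ zeroSumSubsets f J p :=
    sdiff_mem_zeroSumSubsets (by rwa [show p + 2 * p = 3 * p by ring]) hCD
  simp [hone] at hDC

lemma natCast_card_zeroSumSubsets_pred_eq (hodd : Odd p) (hJ : #J = 4 * p - 3)
    (hone : zeroSumSubsets f J p = ∅) :
    (#(zeroSumSubsets f J (p - 1)) : ZMod p) = #(zeroSumSubsets f J (3 * p - 1)) := by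
  classical
  have hp : 2 ≤ p := (Fact.out : p.Prime).two_le
  have htwo {K : Finset ι} (hKJ : K ⊆ J) (hK : 3 * p - 2 ≤ #K) (hK' : #K ≤ 3 * p - 1) :
      (#(zeroSumSubsets f K (2 * p)) : ZMod p) = -1 :=
    natCast_card_zeroSumSubsets_two_mul hodd (by omega) (by omega)
      (subset_empty.1 (hone ▸ zeroSumSubsets_mono f hKJ p))
      (zeroSumSubsets_eq_empty_of_card_lt f (by omega))
  have count := congrArg (Nat.cast (R := ZMod p))
    (sum_card_zeroSumSubsets_sdiff f J (p - 1) (2 * p))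
  have hsdiff : ∀ A ∈ zeroSumSubsets f J (p - 1),
      (#(zeroSumSubsets f (J \ A) (2 * p)) : ZMod p) = -1 := fun A hA => by
    obtain ⟨hAJ, hAcard, -⟩ := mem_zeroSumSubsets.1 hA
    have := card_sdiff_of_subset hAJ
    exact htwo sdiff_subset (by omega) (by omega)
  have hsubset : ∀ D ∈ zeroSumSubsets f J (3 * p - 1),
      (#(zeroSumSubsets f D (2 * p)) : ZMod p) = -1 := fun D hD => by
    obtain ⟨hDJ, hDcard, -⟩ := mem_zeroSumSubsets.1 hD
    exact htwo hDJ (by omega) (by omega)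
  rw [show p - 1 + 2 * p = 3 * p - 1 by omega, Nat.cast_sum, Nat.cast_sum, sum_congr rfl hsdiff,
    sum_congr rfl hsubset] at count
  simpa using count

lemma zeroSumSubsets_nonempty_of_odd (hodd : Odd p) (f : ι → Fin 2 → ZMod p)
    (hJ : #J = 4 * p - 3) : (zeroSumSubsets f J p).Nonempty := by
  have hp : 2 ≤ p := (Fact.out : p.Prime).two_le
  by_contra! hone
  have hthree := zeroSumSubsets_three_mul_eq_empty hodd hone
  have htwo := natCast_card_zeroSumSubsets_two_mul hodd (by omega) (by omega) hone hthree
  have hpred := natCast_card_zeroSumSubsets_pred_eq hodd hJ hone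
  have htwo' : 2 * p + (p - 1) = 3 * p - 1 := by omega
  have hfour : zeroSumSubsets f J (3 * p + (p - 1)) = ∅ :=
    zeroSumSubsets_eq_empty_of_card_lt f (by omega)
  have alternating : (#(zeroSumSubsets f J (p - 1)) : ZMod p)
      - #(zeroSumSubsets f J (p + (p - 1))) + #(zeroSumSubsets f J (3 * p - 1)) = 0 := by
    have := sum_neg_one_pow_mul_card_zeroSumSubsets hodd f (J := J) (n := 4) (r := p - 1)
      (by rw [Fintype.card_fin]; omega) (by omega) (by omega) (Nat.Odd.sub_odd hodd odd_one)
    simpa [sum_range_succ, hfour, htwo', ← sub_eq_add_neg] using this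
  have weighted : (#(zeroSumSubsets f J (p + (p - 1))) : ZMod p)
      + 2 * (-1 - #(zeroSumSubsets f J (3 * p - 1))) = 0 := by
    have := sum_neg_one_pow_mul_mul_card_sub_card hodd f (J := J) (n := 4)
      (by rw [Fintype.card_fin]; omega) (by omega)
    simpa [sum_range_succ, hone, htwo, hthree, hfour, htwo'] using this
  have two_eq_zero : ((2 : ℕ) : ZMod p) = 0 := by
    push_cast
    linear_combination - weighted - alternating + hpred
  have hp2 := Nat.le_of_dvd two_pos ((ZMod.natCast_eq_zero_iff 2 p).1 two_eq_zero)
  obtain ⟨k, hk⟩ := hodd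
  omega

/-- Kemnitz' conjecture for prime modulus. -/
theorem zeroSumSubsets_nonempty (f : ι → Fin 2 → ZMod p) (hJ : 4 * p - 3 ≤ #J) :
    (zeroSumSubsets f J p).Nonempty := by
  classical
  obtain ⟨K, hKJ, hK⟩ := exists_subset_card_eq hJ
  suffices (zeroSumSubsets f K p).Nonempty from this.mono (zeroSumSubsets_mono f hKJ p)
  obtain rfl | hodd := (Fact.out : p.Prime).eq_two_or_odd'
  · obtain ⟨i, hi, j, hj, hij, hf⟩ := exists_ne_map_eq_of_card_lt_of_maps_to
      (t := (univ : Finset (Fin 2 → ZMod 2))) (s := K) (f := f) (by rw [hK]; decide) (by simp)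
    refine ⟨{i, j}, mem_zeroSumSubsets.2 ⟨by simp [insert_subset_iff, hi, hj], card_pair hij, ?_⟩⟩
    rw [sum_pair hij, hf]
    exact funext fun k => CharTwo.add_self_eq_zero (f j k)
  · exact zeroSumSubsets_nonempty_of_odd hodd f hK

end Kemnitz

section MultisetForms

variable {α : Type*}

lemma map_fst_val_le [DecidableEq α] (S : Multiset α) (I : Finset S) : I.val.map (·.1) ≤ S :=
  (Multiset.map_le_map (val_le_iff.2 (subset_univ I))).trans S.map_univ_coe.le

variable {p : ℕ} [Fact p.Prime] {κ : Type*} [Fintype κ]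

lemma exists_le_ne_zero_sum_map_eq_zero (f : α → κ → ZMod p) {S : Multiset α}
    (hS : Fintype.card κ * (p - 1) < Multiset.card S) : ∃ T ≤ S, T ≠ 0 ∧ (T.map f).sum = 0 := by
  classical
  obtain ⟨I, hI, hsum⟩ := exists_nonempty_sum_eq_zero (fun i : S => f i.1)
    (by rwa [Multiset.card_coe])
  exact ⟨I.val.map (·.1), map_fst_val_le S I, by simpa using hI.ne_empty, by simpa using hsum⟩

lemma exists_le_card_eq_sum_map_eq_zero_of_two (f : α → Fin 2 → ZMod p) {S : Multiset α}
    (hS : 4 * p - 3 ≤ Multiset.card S) :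
    ∃ T ≤ S, Multiset.card T = p ∧ (T.map f).sum = 0 := by
  classical
  obtain ⟨I, hI⟩ := zeroSumSubsets_nonempty (J := univ) (fun i : S => f i.1)
    (by rwa [card_univ, Multiset.card_coe])
  obtain ⟨-, hcard, hsum⟩ := mem_zeroSumSubsets.1 hI
  exact ⟨I.val.map (·.1), map_fst_val_le S I, by simpa using hcard, by simpa using hsum⟩

lemma exists_le_card_eq_sum_map_eq_zero_of_one (f : α → Fin 1 → ZMod p) {S : Multiset α}
    (hS : 2 * p - 1 ≤ Multiset.card S) :
    ∃ T ≤ S, Multiset.card T = p ∧ (T.map f).sum = 0 := by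
  classical
  obtain ⟨I, -, hcard, hsum⟩ := ZMod.erdos_ginzburg_ziv (s := univ) (fun i : S => f i.1 0)
    (by rwa [card_univ, Multiset.card_coe])
  refine ⟨I.val.map (·.1), map_fst_val_le S I, by simpa using hcard, funext fun k => ?_⟩
  simpa [Subsingleton.elim k 0] using hsum

end MultisetForms

end ZeroSum

section Blocks

lemma exists_blocks {α : Type*} {P : Multiset α → Prop} {p D : ℕ}
    (hP : ∀ S, D + p ≤ Multiset.card S → ∃ T ≤ S, Multiset.card T = p ∧ P T) (t : ℕ)
    {S : Multiset α} (hS : p * t + D ≤ Multiset.card S) :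
    ∃ (𝓑 : Multiset (Multiset α)) (R : Multiset α), Multiset.card 𝓑 = t ∧ D ≤ Multiset.card R ∧
      𝓑.sum + R = S ∧ ∀ B ∈ 𝓑, Multiset.card B = p ∧ P B := by
  induction t generalizing S with
  | zero => exact ⟨0, S, rfl, by simpa using hS, by simp, by simp⟩
  | succ t ih =>
    rw [mul_add_one] at hS
    obtain ⟨T, hTS, hT, hPT⟩ := hP S (by omega)
    obtain ⟨U, rfl⟩ := Multiset.le_iff_exists_add.1 hTS
    rw [Multiset.card_add] at hS
    obtain ⟨𝓑, R, h𝓑, hR, rfl, hblock⟩ := ih (S := U) (by omega)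
    refine ⟨T ::ₘ 𝓑, R, by simp [h𝓑], hR, by rw [Multiset.sum_cons, add_assoc], ?_⟩
    exact Multiset.forall_mem_cons.2 ⟨⟨hT, hPT⟩, hblock⟩

lemma exists_list_prod_eq_of_blocks {M M' : Type*} [Monoid M] [Monoid M'] (ψ : M' →* M)
    {π : Multiset M → M'} {𝓑 : Multiset (Multiset M)}
    (h𝓑 : ∀ B ∈ 𝓑, B ≠ 0 ∧ ψ (π B) = B.toList.prod) {l' : List M'} (hl' : ↑l' ≤ 𝓑.map π) :
    ∃ l : List M, ↑l ≤ 𝓑.sum ∧ l.prod = ψ l'.prod ∧ l'.length ≤ l.length := by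
  induction l' generalizing 𝓑 with
  | nil => exact ⟨[], by simp⟩
  | cons b l' ih =>
    obtain ⟨B, hB, rfl⟩ := Multiset.mem_map.1 (Multiset.mem_of_le hl' List.mem_cons_self)
    obtain ⟨𝓒, rfl⟩ := Multiset.exists_cons_of_mem hB
    obtain ⟨⟨hB0, hBprod⟩, h𝓒⟩ := Multiset.forall_mem_cons.1 h𝓑
    rw [← Multiset.cons_coe, Multiset.map_cons, Multiset.cons_le_cons_iff] at hl'
    obtain ⟨l, hl, hprod, hlength⟩ := ih h𝓒 hl'
    refine ⟨B.toList ++ l, ?_, ?_, ?_⟩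
    · rw [← Multiset.coe_add, Multiset.coe_toList, Multiset.sum_cons]
      gcongr
    · rw [List.prod_append, List.prod_cons, map_mul, hBprod, hprod]
    · have := Multiset.card_pos.2 hB0
      rw [List.length_append, Multiset.length_toList, List.length_cons]
      omega

end Blocks

/-- Modulo the least prime factor `p` of `m`, the order of `s` divides both `m` and `p - 1`, which
are coprime. -/
lemma exists_prime_dvd_modEq_one {m s : ℕ} (hm : 1 < m) (h : s ^ m ≡ 1 [MOD m]) :
    ∃ p, p.Prime ∧ p ∣ m ∧ s ≡ 1 [MOD p] := by
  have hp : m.minFac.Prime := Nat.minFac_prime hm.ne'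
  have : Fact m.minFac.Prime := ⟨hp⟩
  refine ⟨m.minFac, hp, m.minFac_dvd, ?_⟩
  replace h := h.of_dvd m.minFac_dvd
  rw [← ZMod.natCast_eq_natCast_iff, Nat.cast_one] at h ⊢
  rw [Nat.cast_pow] at h
  have hs : (s : ZMod m.minFac) ≠ 0 := by
    rintro h0
    simp [h0, (zero_lt_one.trans hm).ne'] at h
  rw [← orderOf_eq_one_iff]
  exact Nat.eq_one_of_dvd_coprimes
    (Nat.coprime_of_lt_minFac (Nat.sub_pos_of_lt hp.one_lt).ne' (Nat.sub_lt hp.pos one_pos))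
    (orderOf_dvd_of_pow_eq_one h) (orderOf_dvd_of_pow_eq_one (ZMod.pow_card_sub_one_eq_one hs))

/-- A formal product `y ^ expY * x ^ expX`, where `x * y = y ^ s * x`, together with a `weight`,
which keeps track of the number of letters such a product is composed of. -/
@[ext]
structure MetacyclicWord (s : ℕ) where
  expX : ℕ
  expY : ℕ
  weight : ℕ

namespace MetacyclicWord

variable {s : ℕ}

@[simps]
instance : One (MetacyclicWord s) := ⟨⟨0, 0, 0⟩⟩

@[simps]
instance : Mul (MetacyclicWord s) :=
  ⟨fun u v => ⟨u.expX + v.expX, u.expY + s ^ u.expX * v.expY, u.weight + v.weight⟩⟩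

instance : Monoid (MetacyclicWord s) where
  mul_assoc u v w := by ext <;> simp [pow_add] <;> ring
  one_mul u := by ext <;> simp
  mul_one u := by ext <;> simp

lemma prod_expX (l : List (MetacyclicWord s)) : l.prod.expX = (l.map expX).sum := by
  induction l with
  | nil => rfl
  | cons u l ih => simp [ih]

lemma prod_weight (l : List (MetacyclicWord s)) : l.prod.weight = (l.map weight).sum := by
  induction l with
  | nil => rfl
  | cons u l ih => simp [ih]

lemma prod_expY_modEq {n : ℕ} (hs : s ≡ 1 [MOD n]) (l : List (MetacyclicWord s)) :
    l.prod.expY ≡ (l.map expY).sum [MOD n] := by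
  induction l with
  | nil => rfl
  | cons u l ih => simpa using ((hs.pow u.expX).mul ih).add_left u.expY

/-- Words in `x ^ q` and `y ^ p`, with weight counted in units of `p`, read as words in `x`
and `y`. -/
@[simps]
def scale (q p : ℕ) : MetacyclicWord (s ^ q) →* MetacyclicWord s where
  toFun u := ⟨q * u.expX, p * u.expY, p * u.weight⟩
  map_one' := by ext <;> simp
  map_mul' u v := by ext <;> simp [pow_mul] <;> ring

lemma mem_mrange_scale {q p : ℕ} {u : MetacyclicWord s} :
    u ∈ MonoidHom.mrange (scale q p) ↔ q ∣ u.expX ∧ p ∣ u.expY ∧ p ∣ u.weight := by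
  constructor
  · rintro ⟨v, rfl⟩
    simp
  · rintro ⟨⟨i, hi⟩, ⟨j, hj⟩, ⟨k, hk⟩⟩
    exact ⟨⟨i, j, k⟩, MetacyclicWord.ext hi.symm hj.symm hk.symm⟩

/-- `u` evaluates to the identity if `x ^ m = 1` and `y ^ N = 1`, and its weight is a multiple
of `N`. -/
def Vanishes (m N : ℕ) (u : MetacyclicWord s) : Prop :=
  m ∣ u.expX ∧ N ∣ u.expY ∧ N ∣ u.weight

lemma Vanishes.scale {q p m N : ℕ} {u : MetacyclicWord (s ^ q)} (hu : u.Vanishes m N) :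
    (scale q p u).Vanishes (q * m) (p * N) :=
  ⟨Nat.mul_dvd_mul_left q hu.1, Nat.mul_dvd_mul_left p hu.2.1, Nat.mul_dvd_mul_left p hu.2.2⟩

/-- `S` has a nonempty subsequence that multiplies, in some order, to a vanishing word. -/
def ContainsVanishing (m N : ℕ) (S : Multiset (MetacyclicWord s)) : Prop :=
  ∃ l : List (MetacyclicWord s), l ≠ [] ∧ ↑l ≤ S ∧ l.prod.Vanishes m N

/-- Every sequence of at least `ℓ` words of weight one, together with one word of arbitrary weight,
contains a nonempty vanishing subsequence. The word of arbitrary weight absorbs the terms that are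
left over when blocks of `p` terms are contracted. -/
def ForcesVanishing (s m N ℓ : ℕ) : Prop :=
  ∀ (u : MetacyclicWord s) (S : Multiset (MetacyclicWord s)), ℓ ≤ Multiset.card S →
    (∀ v ∈ S, v.weight = 1) → ContainsVanishing m N (u ::ₘ S)

section Contraction

variable {p q : ℕ}

lemma ContainsVanishing.of_blocks {m N : ℕ} {S : Multiset (MetacyclicWord s)}
    {𝓑 : Multiset (Multiset (MetacyclicWord s))} (h𝓑 : 𝓑.sum ≤ S)
    {π : Multiset (MetacyclicWord s) → MetacyclicWord (s ^ q)}
    (hπ : ∀ B ∈ 𝓑, B ≠ 0 ∧ scale q p (π B) = B.toList.prod)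
    (h : ContainsVanishing m N (𝓑.map π)) : ContainsVanishing (q * m) (p * N) S := by
  obtain ⟨l', hl'0, hl', hvanish⟩ := h
  obtain ⟨l, hl, hprod, hlength⟩ := exists_list_prod_eq_of_blocks (scale q p) hπ hl'
  refine ⟨l, ?_, hl.trans h𝓑, hprod ▸ hvanish.scale⟩
  exact List.ne_nil_of_length_pos ((List.length_pos_of_ne_nil hl'0).trans_le hlength)

variable [Fact p.Prime] {κ : Type*} [Fintype κ]

lemma exists_le_ne_zero_sum_map_eq_zero_dvd_weight (f : MetacyclicWord s → κ → ZMod p)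
    {S : Multiset (MetacyclicWord s)} (hS : (Fintype.card κ + 1) * (p - 1) < Multiset.card S) :
    ∃ T ≤ S, T ≠ 0 ∧ (T.map f).sum = 0 ∧ p ∣ (T.map weight).sum := by
  obtain ⟨T, hTS, hT, hsum⟩ := exists_le_ne_zero_sum_map_eq_zero
    (fun v (o : Option κ) => o.elim (v.weight : ZMod p) (f v)) (by rwa [Fintype.card_option])
  refine ⟨T, hTS, hT, funext fun k => ?_, ?_⟩
  · simpa [Pi.multiset_sum_apply, Function.comp_def] using congrFun hsum (some k)
  · rw [← ZMod.natCast_eq_zero_iff]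
    simpa [Pi.multiset_sum_apply, Nat.cast_multiset_sum, Function.comp_def] using congrFun hsum none

/-- Terms of weight one are contracted in blocks of exactly `p`, which become terms of weight one
over `x ^ q` and `y ^ p`. Among the remaining terms and the word of arbitrary weight, the Davenport
constant provides one further block, which becomes the new word of arbitrary weight. -/
lemma ForcesVanishing.contract (f : MetacyclicWord s → κ → ZMod p)
    (hf : ∀ l : List (MetacyclicWord s), (l.map f).sum = 0 → p ∣ (l.map weight).sum →
      l.prod ∈ MonoidHom.mrange (scale q p))
    (hblock : ∀ S : Multiset (MetacyclicWord s),
      (Fintype.card κ + 1) * (p - 1) + p ≤ Multiset.card S →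
        ∃ T ≤ S, Multiset.card T = p ∧ (T.map f).sum = 0)
    {m N t : ℕ} (h : ForcesVanishing (s ^ q) m N t) :
    ForcesVanishing s (q * m) (p * N) (p * t + (Fintype.card κ + 1) * (p - 1)) := by
  intro u S hS hweight
  have hp : 0 < p := (Fact.out : p.Prime).pos
  obtain ⟨𝓑, R, rfl, hR, rfl, hB⟩ := exists_blocks hblock t hS
  obtain ⟨T, hTR, hT0, hTsum, hTweight⟩ :=
    exists_le_ne_zero_sum_map_eq_zero_dvd_weight f (S := u ::ₘ R) (by simpa using hR)
  have hBweight : ∀ B ∈ 𝓑, (B.map weight).sum = p := fun B hB𝓑 => by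
    have hB1 : ∀ v ∈ B, v.weight = 1 := fun v hv => hweight v <|
      Multiset.mem_add.2 (Or.inl (Multiset.mem_of_le (Multiset.le_sum_of_mem hB𝓑) hv))
    rw [Multiset.map_congr rfl hB1]
    simpa using (hB B hB𝓑).1
  have hrange {B : Multiset (MetacyclicWord s)} (hsum : (B.map f).sum = 0)
      (hdvd : p ∣ (B.map weight).sum) : B.toList.prod ∈ MonoidHom.mrange (scale q p) := by
    rw [← Multiset.sum_map_toList] at hsum hdvd
    exact hf B.toList hsum hdvd
  have hlift : ∀ B ∈ T ::ₘ 𝓑, B ≠ 0 ∧ B.toList.prod ∈ MonoidHom.mrange (scale q p) :=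
    Multiset.forall_mem_cons.2 ⟨⟨hT0, hrange hTsum hTweight⟩, fun B hB𝓑 =>
      ⟨Multiset.card_pos.1 (hp.trans_eq (hB B hB𝓑).1.symm),
        hrange (hB B hB𝓑).2 (hBweight B hB𝓑).symm.dvd⟩⟩
  choose! hne π hπ using hlift
  refine ContainsVanishing.of_blocks (p := p) (𝓑 := T ::ₘ 𝓑) (π := π) ?_
    (fun B hB => ⟨hne B hB, hπ B hB⟩) (Multiset.map_cons π T 𝓑 ▸ h (π T) (𝓑.map π) (by simp) ?_)
  · rw [Multiset.sum_cons, add_comm, ← Multiset.add_cons]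
    gcongr
  · intro v hv
    obtain ⟨B, hB𝓑, rfl⟩ := Multiset.mem_map.1 hv
    have hscale := congrArg weight (hπ B (Multiset.mem_cons_of_mem hB𝓑))
    rw [scale_apply_weight, prod_weight, Multiset.sum_map_toList, hBweight B hB𝓑] at hscale
    exact (Nat.mul_eq_left hp.ne').1 hscale

end Contraction

lemma forcesVanishing_one_one : ForcesVanishing s 1 1 0 := fun u _ _ _ =>
  ⟨[u], by simp, by simp, by simp [Vanishes]⟩

lemma dvd_prod_expX {p : ℕ} {l : List (MetacyclicWord s)}
    (hl : (l.map fun u => (u.expX : ZMod p)).sum = 0) : p ∣ l.prod.expX := by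
  rw [prod_expX, ← ZMod.natCast_eq_zero_iff]
  simpa [Nat.cast_list_sum, Function.comp_def] using hl

lemma dvd_prod_expY {p : ℕ} (hs : s ≡ 1 [MOD p]) {l : List (MetacyclicWord s)}
    (hl : (l.map fun u => (u.expY : ZMod p)).sum = 0) : p ∣ l.prod.expY := by
  rw [(prod_expY_modEq hs l).dvd_iff dvd_rfl, ← ZMod.natCast_eq_zero_iff]
  simpa [Nat.cast_list_sum, Function.comp_def] using hl

lemma ForcesVanishing.contract_expY {p n t : ℕ} [Fact p.Prime] (hs : s ≡ 1 [MOD p])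
    (h : ForcesVanishing (s ^ 1) 1 n t) : ForcesVanishing s 1 (p * n) (p * t + 2 * (p - 1)) := by
  refine h.contract (fun u (_ : Fin 1) => (u.expY : ZMod p)) (fun l hl hweight => ?_) fun S hS => ?_
  · refine mem_mrange_scale.2 ⟨one_dvd _, dvd_prod_expY hs ?_, prod_weight l ▸ hweight⟩
    simpa [Pi.list_sum_apply, Function.comp_def] using congrFun hl 0
  · refine exists_le_card_eq_sum_map_eq_zero_of_one _ ?_
    rw [Fintype.card_fin] at hS
    omega

lemma ForcesVanishing.contract_expX_expY {p m N t : ℕ} [Fact p.Prime] (hs : s ≡ 1 [MOD p])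
    (h : ForcesVanishing (s ^ p) m N t) :
    ForcesVanishing s (p * m) (p * N) (p * t + 3 * (p - 1)) := by
  refine h.contract (fun u => ![(u.expX : ZMod p), (u.expY : ZMod p)]) (fun l hl hweight => ?_)
    fun S hS => ?_
  · refine mem_mrange_scale.2 ⟨dvd_prod_expX ?_, dvd_prod_expY hs ?_, prod_weight l ▸ hweight⟩
    · simpa [Pi.list_sum_apply, Function.comp_def] using congrFun hl 0
    · simpa [Pi.list_sum_apply, Function.comp_def] using congrFun hl 1
  · refine exists_le_card_eq_sum_map_eq_zero_of_two _ ?_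
    rw [Fintype.card_fin] at hS
    omega

lemma forcesVanishing_of_modEq_one {n : ℕ} (hn : n ≠ 0) (hs : s ≡ 1 [MOD n]) :
    ForcesVanishing s 1 n (2 * n - 2) := by
  induction n using induction_on_primes generalizing s with
  | zero => exact absurd rfl hn
  | one => exact forcesVanishing_one_one
  | prime_mul p n hp ih =>
    have : Fact p.Prime := ⟨hp⟩
    have hn : n ≠ 0 := right_ne_zero_of_mul hn
    have contracted := (ih hn (by simpa using hs.of_mul_left p)).contract_expY (hs.of_mul_right n)
    have hp0 := hp.pos
    have hpn : p ≤ p * n := Nat.le_mul_of_pos_right p (Nat.pos_of_ne_zero hn)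
    convert contracted using 1
    rw [Nat.mul_sub, Nat.mul_left_comm p 2 n]
    omega

lemma forcesVanishing_of_pow_modEq_one {m n : ℕ} (hm : m ≠ 0) (hn : n ≠ 0)
    (hs : s ^ m ≡ 1 [MOD m * n]) : ForcesVanishing s m (m * n) (m + 2 * (m * n) - 3) := by
  induction m using Nat.strong_induction_on generalizing s with
  | _ m ih =>
    obtain rfl | hm1 : m = 1 ∨ 1 < m := by omega
    · rw [pow_one, one_mul] at hs
      convert forcesVanishing_of_modEq_one hn hs using 1 <;> omega
    obtain ⟨p, hp, ⟨m, rfl⟩, hsp⟩ := exists_prime_dvd_modEq_one hm1 (hs.of_mul_right n)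
    have : Fact p.Prime := ⟨hp⟩
    have hm' : m ≠ 0 := right_ne_zero_of_mul hm
    have hlt : m < p * m := lt_mul_of_one_lt_left (Nat.pos_of_ne_zero hm') hp.one_lt
    rw [mul_assoc] at hs ⊢
    have contracted :=
      (ih m hlt hm' (by simpa only [pow_mul] using hs.of_mul_left p)).contract_expX_expY hsp
    have hp0 := hp.pos
    have hpm : p ≤ p * m := Nat.le_mul_of_pos_right p (Nat.pos_of_ne_zero hm')
    have hpmn : p * m ≤ p * (m * n) :=
      Nat.mul_le_mul_left p (Nat.le_mul_of_pos_right m (Nat.pos_of_ne_zero hn))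
    convert contracted using 1
    rw [Nat.mul_sub, mul_add, Nat.mul_left_comm p 2 (m * n)]
    omega

end MetacyclicWord

section UpperBound

variable {G : Type*} [Group G] {x y : G} {s : ℕ}

lemma semiconjBy_pow_pow (h : SemiconjBy x y (y ^ s)) (i : ℕ) :
    SemiconjBy (x ^ i) y (y ^ s ^ i) := by
  induction i with
  | zero => simp
  | succ i ih => rw [pow_succ', pow_succ', pow_mul]; exact (h.pow_right _).mul_left ih

lemma pow_modEq_one_of_semiconjBy {m : ℕ} (h : SemiconjBy x y (y ^ s)) (hx : x ^ m = 1) :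
    s ^ m ≡ 1 [MOD orderOf y] := by
  have hy := (semiconjBy_pow_pow h m).eq
  rw [hx, one_mul, mul_one] at hy
  rw [← pow_eq_pow_iff_modEq, pow_one, ← hy]

/-- The evaluation `y ^ expY * x ^ expX` of a word in a group where `x * y = y ^ s * x`. -/
@[simps]
def MetacyclicWord.eval (h : SemiconjBy x y (y ^ s)) : MetacyclicWord s →* G where
  toFun u := y ^ u.expY * x ^ u.expX
  map_one' := by simp
  map_mul' u v := by
    have swap := ((semiconjBy_pow_pow h u.expX).pow_right v.expY).eq
    rw [← pow_mul] at swap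
    simp only [MetacyclicWord.mul_expX, MetacyclicWord.mul_expY, pow_add, mul_assoc]
    rw [← mul_assoc (x ^ _), swap, mul_assoc]

lemma MetacyclicWord.Vanishes.eval_eq_one {m : ℕ} {u : MetacyclicWord s}
    (h : SemiconjBy x y (y ^ s)) (hx : x ^ m = 1) (hu : u.Vanishes m (orderOf y)) :
    MetacyclicWord.eval h u = 1 := by
  obtain ⟨⟨i, hi⟩, hy, -⟩ := hu
  rw [MetacyclicWord.eval_apply, orderOf_dvd_iff_pow_eq_one.1 hy, hi, pow_mul, hx, one_pow, one_mul]

theorem exists_le_isProductOne_of_semiconjBy {m n : ℕ} (hm : m ≠ 0) (hn : n ≠ 0)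
    (hx : x ^ m = 1) (hy : orderOf y = m * n) (h : SemiconjBy x y (y ^ s))
    (hgen : ∀ g, ∃ i j : ℕ, y ^ j * x ^ i = g) {S : Multiset G}
    (hS : m + 2 * (m * n) - 2 ≤ Multiset.card S) :
    ∃ T ≤ S, T ≠ 0 ∧ m * n ∣ Multiset.card T ∧ IsProductOne T := by
  choose expX expY hword using hgen
  let word (g : G) : MetacyclicWord s := ⟨expX g, expY g, 1⟩
  have eval_word (g : G) : MetacyclicWord.eval h (word g) = g := hword g
  have hmn : 0 < m * n := Nat.pos_of_ne_zero (mul_ne_zero hm hn)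
  obtain ⟨g, hg⟩ := Multiset.card_pos_iff_exists_mem.1 (show 0 < Multiset.card S by omega)
  obtain ⟨R, rfl⟩ := Multiset.exists_cons_of_mem hg
  rw [Multiset.card_cons] at hS
  obtain ⟨l, hl0, hl, hvanish⟩ := MetacyclicWord.forcesVanishing_of_pow_modEq_one hm hn
    (hy ▸ pow_modEq_one_of_semiconjBy h hx) (word g) (R.map word)
    (by rw [Multiset.card_map]; omega) (by simp [word])
  rw [← Multiset.map_cons] at hl
  have hweight : l.prod.weight = l.length := by
    rw [MetacyclicWord.prod_weight, List.map_congr_left (g := fun _ => 1)]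
    · simp
    · intro u hu
      obtain ⟨g', -, rfl⟩ := Multiset.mem_map.1 (Multiset.mem_of_le hl hu)
      rfl
  refine ⟨(l.map (MetacyclicWord.eval h) : List G), ?_, by simpa using hl0, ?_, _, rfl, ?_⟩
  · have hmap := Multiset.map_le_map (f := MetacyclicWord.eval h) hl
    rw [Multiset.map_map] at hmap
    simpa only [Function.comp_def, eval_word, Multiset.map_id', Multiset.map_coe] using hmap
  · simpa [hweight] using hvanish.2.2
  · rw [← map_list_prod]
    exact MetacyclicWord.Vanishes.eval_eq_one h hx (hy ▸ hvanish)

end UpperBound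

section LowerBound

lemma exists_eq_add_of_le_add {α : Type*} {S T U : Multiset α} (h : S ≤ T + U) :
    ∃ T' U', T' ≤ T ∧ U' ≤ U ∧ S = T' + U' := by
  classical
  refine ⟨S ∩ T, S - T, Multiset.inter_le_right, tsub_le_iff_left.2 h, ?_⟩
  rw [add_comm, Multiset.sub_add_inter]

variable {G : Type*} [Group G]

lemma IsProductOne.prod_map_eq_one {Q : Type*} [CommGroup Q] (f : G →* Q) {S : Multiset G}
    (hS : IsProductOne S) : (S.map f).prod = 1 := by
  obtain ⟨l, rfl, hl⟩ := hS
  rw [Multiset.map_coe, Multiset.prod_coe, ← map_list_prod, hl, map_one]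

lemma IsProductOne.pow_eq_one {y : G} {b c : ℕ}
    (h : IsProductOne (Multiset.replicate b y + Multiset.replicate c 1)) : y ^ b = 1 := by
  obtain ⟨l, hl, hprod⟩ := h
  rw [← Multiset.coe_replicate, ← Multiset.coe_replicate, Multiset.coe_add,
    Multiset.coe_eq_coe] at hl
  have hcomm : (List.replicate b y ++ List.replicate c 1).Pairwise Commute := by
    simp [List.pairwise_append, List.pairwise_replicate]
  rw [← hl.symm.prod_eq' hcomm] at hprod
  simpa using hprod

lemma eq_zero_of_isProductOne_of_dvd_card {Q : Type*} [CommGroup Q] (f : G →* Q) {x y : G} {m N : ℕ}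
    (hm : 0 < m) (hN : 0 < N) (hfx : orderOf (f x) = m) (hfy : f y = 1) (hy : orderOf y = N)
    {T : Multiset G}
    (hT : T ≤ Multiset.replicate (m - 1) x
      + (Multiset.replicate (N - 1) y + Multiset.replicate (N - 1) 1))
    (hdvd : N ∣ Multiset.card T) (hone : IsProductOne T) : T = 0 := by
  obtain ⟨X, T', hX, hT', rfl⟩ := exists_eq_add_of_le_add hT
  obtain ⟨Y, E, hY, hE, rfl⟩ := exists_eq_add_of_le_add hT'
  obtain ⟨a, ha, rfl⟩ := Multiset.le_replicate_iff.1 hX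
  obtain ⟨b, hb, rfl⟩ := Multiset.le_replicate_iff.1 hY
  obtain ⟨c, hc, rfl⟩ := Multiset.le_replicate_iff.1 hE
  obtain rfl : a = 0 := by
    have hfxa : f x ^ a = 1 := by simpa [hfy] using hone.prod_map_eq_one f
    exact Nat.eq_zero_of_dvd_of_lt (orderOf_dvd_of_pow_eq_one hfxa) (by omega)
  rw [Multiset.replicate_zero, zero_add] at hone hdvd
  obtain rfl : b = 0 :=
    Nat.eq_zero_of_dvd_of_lt (orderOf_dvd_of_pow_eq_one hone.pow_eq_one) (by omega)
  obtain rfl : c = 0 := Nat.eq_zero_of_dvd_of_lt (by simpa using hdvd) (by omega)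
  simp

end LowerBound

section Semidirect

open Multiplicative

lemma orderOf_ofAdd_one (N : ℕ) : orderOf (ofAdd (1 : ZMod N)) = N := by
  rw [orderOf_ofAdd_eq_addOrderOf, ZMod.addOrderOf_one]

lemma ofAdd_one_pow_val {N : ℕ} [NeZero N] (a : Multiplicative (ZMod N)) :
    ofAdd (1 : ZMod N) ^ a.toAdd.val = a := by
  rw [← ofAdd_nsmul, nsmul_one, ZMod.natCast_zmod_val, ofAdd_toAdd]

variable {m N : ℕ} (φ : Multiplicative (ZMod m) →* MulAut (Multiplicative (ZMod N)))

lemma orderOf_inr_ofAdd_one : orderOf (SemidirectProduct.inr (ofAdd 1) : _ ⋊[φ] _) = m := by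
  rw [orderOf_injective _ SemidirectProduct.inr_injective, orderOf_ofAdd_one]

lemma orderOf_inl_ofAdd_one : orderOf (SemidirectProduct.inl (ofAdd 1) : _ ⋊[φ] _) = N := by
  rw [orderOf_injective _ SemidirectProduct.inl_injective, orderOf_ofAdd_one]

variable [NeZero N]

lemma semiconjBy_inr_inl (g : Multiplicative (ZMod m)) :
    SemiconjBy (SemidirectProduct.inr g : _ ⋊[φ] _) (SemidirectProduct.inl (ofAdd 1))
      (SemidirectProduct.inl (ofAdd 1) ^ (φ g (ofAdd 1)).toAdd.val) := by
  rw [← map_pow, ofAdd_one_pow_val, SemidirectProduct.inl_aut, SemiconjBy]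
  simp

lemma exists_inl_pow_mul_inr_pow_eq [NeZero m]
    (g : Multiplicative (ZMod N) ⋊[φ] Multiplicative (ZMod m)) :
    ∃ i j : ℕ, (SemidirectProduct.inl (ofAdd 1) ^ j * SemidirectProduct.inr (ofAdd 1) ^ i
      : _ ⋊[φ] _) = g := by
  refine ⟨g.right.toAdd.val, g.left.toAdd.val, ?_⟩
  rw [← map_pow SemidirectProduct.inl, ← map_pow SemidirectProduct.inr, ofAdd_one_pow_val,
    ofAdd_one_pow_val, SemidirectProduct.inl_left_mul_inr_right]

end Semidirect

/-- For `G ≅ C_m ⋉_φ C_{mn}`, `s_{mnℕ}(G) = m + 2mn − 2`: it is the least `l`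
such that every sequence over `G` of length `≥ l` contains a nonempty
product-one subsequence of length divisible by `mn`. -/
theorem s_mnN_eq (m n : ℕ) (hm : 0 < m) (hn : 0 < n)
    (φ : Multiplicative (ZMod m) →* MulAut (Multiplicative (ZMod (m * n)))) :
    IsLeast {l : ℕ |
        ∀ S : Multiset (Multiplicative (ZMod (m * n)) ⋊[φ] Multiplicative (ZMod m)),
          l ≤ Multiset.card S →
          ∃ T ≤ S, T ≠ 0 ∧ m * n ∣ Multiset.card T ∧ IsProductOne T}
      (m + 2 * (m * n) - 2) := by
  have hmn : 0 < m * n := Nat.mul_pos hm hn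
  have : NeZero m := ⟨hm.ne'⟩
  have : NeZero (m * n) := ⟨hmn.ne'⟩
  let x : _ ⋊[φ] _ := SemidirectProduct.inr (.ofAdd 1)
  let y : _ ⋊[φ] _ := SemidirectProduct.inl (.ofAdd 1)
  have hx : orderOf x = m := orderOf_inr_ofAdd_one φ
  have hy : orderOf y = m * n := orderOf_inl_ofAdd_one φ
  refine ⟨fun S hS => exists_le_isProductOne_of_semiconjBy hm.ne' hn.ne'
    (orderOf_dvd_iff_pow_eq_one.1 hx.dvd) hy (semiconjBy_inr_inl φ _)
    (exists_inl_pow_mul_inr_pow_eq φ) hS, fun l hl => ?_⟩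
  by_contra! hlt
  obtain ⟨T, hT, hT0, hdvd, hone⟩ := hl (.replicate (m - 1) x + (.replicate (m * n - 1) y
    + .replicate (m * n - 1) 1)) (by simp only [Multiset.card_add, Multiset.card_replicate]; omega)
  exact hT0 (eq_zero_of_isProductOne_of_dvd_card SemidirectProduct.rightHom hm hmn
    (orderOf_ofAdd_one m) (SemidirectProduct.rightHom_inl _) hy hT hdvd hone)
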